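/- Let h(z) = ∑ aₙ zⁿ be analytic on the unit disk with |h| < 1, a = |a₀|. Then for r ∈ [0, 1/3], ∑_{n≥1} |aₙ| rⁿ ≤ (1 - a²) r / (1 - a r). -/

import Mathlib

/-!
Divide out the Schwarz–Pick quotient: `h z - h 0 = z * g z * ((1 - a²) - conj (h 0) * (h z - h 0))`
with `|g| ≤ 1` on the disk. The majorant series `∑ |aₙ| rⁿ` is subadditive and submultiplicative,
and by Bohr's inequality that of `g` is at most `1` for `r ≤ 1/3`. Hence the majorant series `S` of
`h - h 0` satisfies `S ≤ r * ((1 - a²) + a * S)`, which is solved for `S`. Bohr's inequality itself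
comes from Carathéodory's coefficient bound for functions with nonnegative real part, applied to
`1 - u * g` for the unimodular `u` that rotates `g 0` to `|g 0|`.
-/

open Metric Real ComplexConjugate Filter
open Finset.HasAntidiagonal (antidiagonal mem_antidiagonal)
open scoped Topology

section TaylorCoeff

variable {𝕜 : Type*} [NontriviallyNormedField 𝕜] {f g : 𝕜 → 𝕜} {c : 𝕜} {n : ℕ}

/-- The `n`-th coefficient of the Taylor series of `f` at `c`, as a scalar; Mathlib's
`taylorCoeffWithin` is restricted to functions of a real variable. -/
noncomputable def taylorCoeff (f : 𝕜 → 𝕜) (c : 𝕜) (n : ℕ) : 𝕜 :=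
  iteratedDeriv n f c / n.factorial

@[simp]
lemma taylorCoeff_zero (f : 𝕜 → 𝕜) (c : 𝕜) : taylorCoeff f c 0 = f c := by
  simp [taylorCoeff]

lemma taylorCoeff_congr (hfg : f =ᶠ[𝓝 c] g) (n : ℕ) : taylorCoeff f c n = taylorCoeff g c n := by
  rw [taylorCoeff, hfg.iteratedDeriv_eq, taylorCoeff]

lemma taylorCoeff_const (b c : 𝕜) (n : ℕ) :
    taylorCoeff (fun _ ↦ b) c n = if n = 0 then b else 0 := by
  rcases eq_or_ne n 0 with rfl | hn <;> simp [taylorCoeff, iteratedDeriv_const, *]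

lemma taylorCoeff_const_mul (b : 𝕜) (f : 𝕜 → 𝕜) (c : 𝕜) (n : ℕ) :
    taylorCoeff (fun z ↦ b * f z) c n = b * taylorCoeff f c n := by
  rw [taylorCoeff, iteratedDeriv_const_mul_field, mul_div_assoc, taylorCoeff]

lemma taylorCoeff_sub (hf : ContDiffAt 𝕜 n f c) (hg : ContDiffAt 𝕜 n g c) :
    taylorCoeff (fun z ↦ f z - g z) c n = taylorCoeff f c n - taylorCoeff g c n := by
  rw [taylorCoeff, iteratedDeriv_fun_sub hf hg, sub_div, taylorCoeff, taylorCoeff]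

lemma taylorCoeff_mul [CharZero 𝕜] (hf : ContDiffAt 𝕜 n f c) (hg : ContDiffAt 𝕜 n g c) :
    taylorCoeff (fun z ↦ f z * g z) c n =
      ∑ p ∈ antidiagonal n, taylorCoeff f c p.1 * taylorCoeff g c p.2 := by
  rw [taylorCoeff, iteratedDeriv_fun_mul hf hg, Finset.sum_div,
    Finset.Nat.sum_antidiagonal_eq_sum_range_succ
      (fun i j ↦ taylorCoeff f c i * taylorCoeff g c j)]
  refine Finset.sum_congr rfl fun i hi ↦ ?_
  have hn : (n.factorial : 𝕜) ≠ 0 := Nat.cast_ne_zero.mpr n.factorial_ne_zero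
  rw [Nat.cast_choose 𝕜 (Nat.lt_succ_iff.mp (Finset.mem_range.mp hi)), taylorCoeff, taylorCoeff]
  field_simp

lemma taylorCoeff_sub_center (c : 𝕜) (n : ℕ) :
    taylorCoeff (fun z ↦ z - c) c n = if n = 1 then 1 else 0 := by
  rw [taylorCoeff_sub contDiffAt_fun_id contDiffAt_const, taylorCoeff_const, taylorCoeff,
    iteratedDeriv_fun_id]
  rcases n with _ | _ | n <;> simp

end TaylorCoeff

lemma contDiffAt_center_of_differentiableOn_ball {f : ℂ → ℂ} {c : ℂ} {R : ℝ} (hR : 0 < R)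
    (hf : DifferentiableOn ℂ f (ball c R)) (n : ℕ) : ContDiffAt ℂ n f c :=
  (hf.analyticAt (ball_mem_nhds c hR)).contDiffAt

section Caratheodory

variable {f : ℂ → ℂ} {c : ℂ} {R M : ℝ} {n : ℕ}

lemma norm_circleAverage_le_circleAverage_norm {E : Type*} [NormedAddCommGroup E] [NormedSpace ℝ E]
    (f : ℂ → E) (c : ℂ) (R : ℝ) :
    ‖circleAverage f c R‖ ≤ circleAverage (fun z ↦ ‖f z‖) c R := by
  rw [circleAverage, circleAverage, norm_smul, norm_of_nonneg (by positivity), smul_eq_mul]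
  gcongr
  exact intervalIntegral.norm_integral_le_integral_norm two_pi_pos.le

lemma circleAverage_inv_pow_mul_eq_taylorCoeff (hR : 0 < R) (hf : DiffContOnCl ℂ f (ball c R))
    (n : ℕ) : circleAverage (fun z ↦ ((z - c) ^ n)⁻¹ * f z) c R = taylorCoeff f c n := by
  have cauchy := hf.circleIntegral_one_div_sub_center_pow_smul hR n
  rw [circleAverage_eq_circleIntegral hR.ne']
  simp only [smul_eq_mul, ← mul_assoc, ← mul_inv, ← pow_succ', one_div] at cauchy ⊢
  rw [cauchy, taylorCoeff]
  field_simp [Complex.two_pi_I_ne_zero]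

-- On the circle `w := (z - c) ^ n` satisfies `w⁻¹ = conj w / R ^ (2 * n)`, which turns the
-- integrand into the conjugate of a holomorphic function vanishing at `c`.
lemma circleAverage_inv_pow_mul_conj_eq_zero (hR : 0 < R) (hf : DiffContOnCl ℂ f (ball c R))
    (hn : n ≠ 0) : circleAverage (fun z ↦ ((z - c) ^ n)⁻¹ * conj (f z)) c R = 0 := by
  have hpow : DiffContOnCl ℂ (fun z ↦ (z - c) ^ n * f z) (ball c R) :=
    ((differentiable_id.sub_const c).pow n).diffContOnCl.smul hf
  have mean : circleAverage (fun z ↦ (z - c) ^ n * f z) c R = 0 := by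
    rw [DiffContOnCl.circleAverage (by rwa [abs_of_pos hR])]
    simp [hn]
  have hint : CircleIntegrable (fun z ↦ (z - c) ^ n * f z) c R :=
    (hpow.continuousOn_ball.mono sphere_subset_closedBall).circleIntegrable hR.le
  have conj_mean := Complex.conjCLE.toContinuousLinearMap.circleAverage_comp_comm hint
  rw [mean, map_zero] at conj_mean
  have on_sphere : Set.EqOn (fun z ↦ ((z - c) ^ n)⁻¹ * conj (f z))
      (fun z ↦ ((R ^ n) ^ 2 : ℝ)⁻¹ • conj ((z - c) ^ n * f z)) (sphere c |R|) := by
    intro z hz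
    have hz' : ‖z - c‖ = R := by simpa [abs_of_pos hR, dist_eq_norm] using hz
    simp only [Complex.inv_def, Complex.normSq_eq_norm_sq, norm_pow, hz', map_mul,
      Complex.real_smul]
    ring
  rw [circleAverage_congr_sphere on_sphere, circleAverage_fun_smul]
  exact smul_eq_zero_of_right _ conj_mean

lemma taylorCoeff_eq_circleAverage_re (hR : 0 < R) (hf : DiffContOnCl ℂ f (ball c R))
    (hn : n ≠ 0) :
    taylorCoeff f c n = circleAverage (fun z ↦ ((z - c) ^ n)⁻¹ * (2 * (f z).re : ℝ)) c R := by
  have hinv : ContinuousOn (fun z ↦ ((z - c) ^ n)⁻¹) (sphere c R) :=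
    ContinuousOn.inv₀ (by fun_prop) fun z hz ↦
      pow_ne_zero n (sub_ne_zero.mpr (ne_of_mem_sphere hz hR.ne'))
  have hfc : ContinuousOn f (sphere c R) := hf.continuousOn_ball.mono sphere_subset_closedBall
  have hint := (hinv.fun_mul hfc).circleIntegrable hR.le
  have hint_conj :=
    (hinv.fun_mul (Complex.continuous_conj.comp_continuousOn' hfc)).circleIntegrable hR.le
  calc taylorCoeff f c n
      = circleAverage (fun z ↦ ((z - c) ^ n)⁻¹ * f z) c R +
          circleAverage (fun z ↦ ((z - c) ^ n)⁻¹ * conj (f z)) c R := by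
        rw [circleAverage_inv_pow_mul_eq_taylorCoeff hR hf,
          circleAverage_inv_pow_mul_conj_eq_zero hR hf hn, add_zero]
    _ = circleAverage (fun z ↦ ((z - c) ^ n)⁻¹ * (2 * (f z).re : ℝ)) c R := by
        rw [← circleAverage_fun_add hint hint_conj]
        simp only [← mul_add, Complex.add_conj]

lemma norm_taylorCoeff_mul_pow_le_of_re_nonneg_on_sphere (hR : 0 < R)
    (hf : DiffContOnCl ℂ f (ball c R)) (hre : ∀ z ∈ sphere c R, 0 ≤ (f z).re) (hn : n ≠ 0) :
    ‖taylorCoeff f c n‖ * R ^ n ≤ 2 * (f c).re := by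
  have hint : CircleIntegrable f c R :=
    (hf.continuousOn_ball.mono sphere_subset_closedBall).circleIntegrable hR.le
  have mean_re : circleAverage (fun z ↦ (f z).re) c R = (f c).re := by
    rw [← DiffContOnCl.circleAverage (f := f) (R := R) (by rwa [abs_of_pos hR])]
    exact Complex.reCLM.circleAverage_comp_comm hint
  have on_sphere : Set.EqOn (fun z ↦ ‖((z - c) ^ n)⁻¹ * (2 * (f z).re : ℝ)‖)
      (fun z ↦ (2 / R ^ n) • (f z).re) (sphere c |R|) := by
    intro z hz
    rw [abs_of_pos hR] at hz
    have hz' : ‖z - c‖ = R := by simpa [dist_eq_norm] using hz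
    simp only [norm_mul, norm_inv, norm_pow, hz', Complex.norm_real, Real.norm_ofNat,
      norm_of_nonneg (hre z hz), smul_eq_mul]
    ring
  rw [← le_div_iff₀ (by positivity), taylorCoeff_eq_circleAverage_re hR hf hn]
  calc ‖circleAverage (fun z ↦ ((z - c) ^ n)⁻¹ * (2 * (f z).re : ℝ)) c R‖
      ≤ circleAverage (fun z ↦ ‖((z - c) ^ n)⁻¹ * (2 * (f z).re : ℝ)‖) c R :=
        norm_circleAverage_le_circleAverage_norm _ _ _
    _ = (2 / R ^ n) * (f c).re := by
        rw [circleAverage_congr_sphere on_sphere, circleAverage_fun_smul, mean_re, smul_eq_mul]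
    _ = 2 * (f c).re / R ^ n := by ring

lemma caratheodory_norm_taylorCoeff_mul_pow_le (hR : 0 < R) (hf : DifferentiableOn ℂ f (ball c R))
    (hre : ∀ z ∈ ball c R, 0 ≤ (f z).re) (hn : n ≠ 0) :
    ‖taylorCoeff f c n‖ * R ^ n ≤ 2 * (f c).re := by
  have hlim : Tendsto (fun ρ ↦ ‖taylorCoeff f c n‖ * ρ ^ n) (𝓝[<] R)
      (𝓝 (‖taylorCoeff f c n‖ * R ^ n)) :=
    (Continuous.tendsto (by fun_prop) R).mono_left nhdsWithin_le_nhds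
  refine le_of_tendsto hlim ?_
  filter_upwards [Ioo_mem_nhdsLT hR] with ρ hρ
  have hsub : closedBall c ρ ⊆ ball c R := closedBall_subset_ball hρ.2
  exact norm_taylorCoeff_mul_pow_le_of_re_nonneg_on_sphere hρ.1 (hf.diffContOnCl_ball hsub)
    (fun z hz ↦ hre z (hsub (sphere_subset_closedBall hz))) hn

lemma norm_taylorCoeff_mul_pow_le_two_mul_sub_norm (hR : 0 < R)
    (hf : DifferentiableOn ℂ f (ball c R)) (hM : ∀ z ∈ ball c R, ‖f z‖ ≤ M) (hn : n ≠ 0) :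
    ‖taylorCoeff f c n‖ * R ^ n ≤ 2 * (M - ‖f c‖) := by
  obtain ⟨u, hu, hufc⟩ := RCLike.exists_norm_eq_mul_self (f c)
  have hcoeff : ‖taylorCoeff (fun z ↦ M - u * f z) c n‖ = ‖taylorCoeff f c n‖ := by
    rw [taylorCoeff_sub contDiffAt_const
      (contDiffAt_center_of_differentiableOn_ball hR (hf.const_mul u) n),
      taylorCoeff_const, if_neg hn, zero_sub, taylorCoeff_const_mul, norm_neg, norm_mul, hu,
      one_mul]
  have hre : ∀ z ∈ ball c R, 0 ≤ ((M : ℂ) - u * f z).re := fun z hz ↦ by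
    have := (Complex.re_le_norm (u * f z)).trans_eq (by rw [norm_mul, hu, one_mul])
    simpa using this.trans (hM z hz)
  have := caratheodory_norm_taylorCoeff_mul_pow_le hR ((hf.const_mul u).const_sub (M : ℂ)) hre hn
  simpa [hcoeff, ← hufc] using this

end Caratheodory

section Majorant

variable {f g : ℂ → ℂ} {c : ℂ} {r R M : ℝ}

/-- The majorant series `∑ |aₙ| rⁿ` of the Taylor series `∑ aₙ (z - c)ⁿ` of `f`; it takes the junk
value `0` where it diverges. -/
noncomputable def majorantSeries (f : ℂ → ℂ) (c : ℂ) (r : ℝ) : ℝ :=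
  ∑' n, ‖taylorCoeff f c n‖ * r ^ n

lemma majorantSeries_nonneg (f : ℂ → ℂ) (c : ℂ) (hr : 0 ≤ r) : 0 ≤ majorantSeries f c r :=
  tsum_nonneg fun n ↦ by positivity

lemma majorantSeries_congr (hfg : f =ᶠ[𝓝 c] g) (r : ℝ) :
    majorantSeries f c r = majorantSeries g c r := by
  simp only [majorantSeries, taylorCoeff_congr hfg]

lemma majorantSeries_const (b c : ℂ) (r : ℝ) : majorantSeries (fun _ ↦ b) c r = ‖b‖ := by
  rw [majorantSeries, tsum_eq_single 0 fun n hn ↦ by simp [taylorCoeff_const, hn]]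
  simp

lemma majorantSeries_sub_center (c : ℂ) (r : ℝ) : majorantSeries (fun z ↦ z - c) c r = r := by
  rw [majorantSeries, tsum_eq_single 1 fun n hn ↦ by simp [taylorCoeff_sub_center, hn]]
  simp [taylorCoeff_sub_center]

lemma majorantSeries_const_mul (b : ℂ) (f : ℂ → ℂ) (c : ℂ) (r : ℝ) :
    majorantSeries (fun z ↦ b * f z) c r = ‖b‖ * majorantSeries f c r := by
  simp only [majorantSeries, taylorCoeff_const_mul, norm_mul, mul_assoc, tsum_mul_left]

lemma summable_norm_taylorCoeff_mul_pow (hf : DifferentiableOn ℂ f (ball c R)) (hr : 0 ≤ r)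
    (hrR : r < R) : Summable fun n ↦ ‖taylorCoeff f c n‖ * r ^ n := by
  have hmem : c + r ∈ ball c R := by simpa [abs_of_nonneg hr] using hrR
  refine (Complex.hasSum_taylorSeries_on_ball hf hmem).summable.norm.congr fun n ↦ ?_
  simp only [add_sub_cancel_left, smul_eq_mul, norm_mul, norm_inv, norm_pow, Complex.norm_real,
    norm_of_nonneg hr, taylorCoeff, norm_div]
  ring

lemma majorantSeries_sub_apply_center (hf : DifferentiableOn ℂ f (ball c R)) (hr : 0 ≤ r)
    (hrR : r < R) :
    majorantSeries (fun z ↦ f z - f c) c r =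
      ∑' n, ‖taylorCoeff f c (n + 1)‖ * r ^ (n + 1) := by
  have hcoeff (n : ℕ) : taylorCoeff (fun z ↦ f z - f c) c (n + 1) = taylorCoeff f c (n + 1) := by
    rw [taylorCoeff_sub
      (contDiffAt_center_of_differentiableOn_ball (hr.trans_lt hrR) hf _) contDiffAt_const,
      taylorCoeff_const, if_neg n.succ_ne_zero, sub_zero]
  rw [majorantSeries,
    (summable_norm_taylorCoeff_mul_pow (hf.sub_const (f c)) hr hrR).tsum_eq_zero_add]
  simp [hcoeff]

lemma majorantSeries_sub_le (hf : DifferentiableOn ℂ f (ball c R))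
    (hg : DifferentiableOn ℂ g (ball c R)) (hr : 0 ≤ r) (hrR : r < R) :
    majorantSeries (fun z ↦ f z - g z) c r ≤ majorantSeries f c r + majorantSeries g c r := by
  have hsf := summable_norm_taylorCoeff_mul_pow hf hr hrR
  have hsg := summable_norm_taylorCoeff_mul_pow hg hr hrR
  have hR := hr.trans_lt hrR
  rw [majorantSeries, majorantSeries, majorantSeries, ← hsf.tsum_add hsg]
  refine (summable_norm_taylorCoeff_mul_pow (hf.fun_sub hg) hr hrR).tsum_le_tsum (fun n ↦ ?_)
    (hsf.add hsg)
  rw [← add_mul, taylorCoeff_sub (contDiffAt_center_of_differentiableOn_ball hR hf n)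
    (contDiffAt_center_of_differentiableOn_ball hR hg n)]
  gcongr
  exact norm_sub_le _ _

lemma majorantSeries_mul_le (hf : DifferentiableOn ℂ f (ball c R))
    (hg : DifferentiableOn ℂ g (ball c R)) (hr : 0 ≤ r) (hrR : r < R) :
    majorantSeries (fun z ↦ f z * g z) c r ≤ majorantSeries f c r * majorantSeries g c r := by
  have hsf := (summable_norm_taylorCoeff_mul_pow hf hr hrR).norm
  have hsg := (summable_norm_taylorCoeff_mul_pow hg hr hrR).norm
  have hR := hr.trans_lt hrR
  rw [majorantSeries, majorantSeries, majorantSeries,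
    tsum_mul_tsum_eq_tsum_sum_antidiagonal_of_summable_norm hsf hsg]
  refine (summable_norm_taylorCoeff_mul_pow (hf.fun_mul hg) hr hrR).tsum_le_tsum (fun n ↦ ?_)
    (summable_norm_sum_mul_antidiagonal_of_summable_norm hsf hsg).of_norm
  rw [taylorCoeff_mul (contDiffAt_center_of_differentiableOn_ball hR hf n)
    (contDiffAt_center_of_differentiableOn_ball hR hg n)]
  calc ‖∑ p ∈ antidiagonal n, taylorCoeff f c p.1 * taylorCoeff g c p.2‖ * r ^ n
      ≤ (∑ p ∈ antidiagonal n, ‖taylorCoeff f c p.1‖ * ‖taylorCoeff g c p.2‖) * r ^ n := by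
        gcongr
        exact norm_sum_le_of_le _ fun p _ ↦ norm_mul_le _ _
    _ = ∑ p ∈ antidiagonal n,
          ‖taylorCoeff f c p.1‖ * r ^ p.1 * (‖taylorCoeff g c p.2‖ * r ^ p.2) := by
        rw [Finset.sum_mul]
        refine Finset.sum_congr rfl fun p hp ↦ ?_
        rw [← mem_antidiagonal.mp hp, pow_add]
        ring

lemma bohr_majorantSeries_le (hR : 0 < R) (hf : DifferentiableOn ℂ f (ball c R))
    (hM : ∀ z ∈ ball c R, ‖f z‖ ≤ M) (hr : 0 ≤ r) (hrR : 3 * r ≤ R) :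
    majorantSeries f c r ≤ M := by
  have hs := summable_norm_taylorCoeff_mul_pow hf hr (by linarith)
  have hgeom : HasSum (fun n : ℕ ↦ 2 * (M - ‖f c‖) * (1 / 3) ^ (n + 1)) (M - ‖f c‖) := by
    have := ((hasSum_geometric_of_lt_one (r := (1 / 3 : ℝ)) (by norm_num) (by norm_num)).mul_left
      (2 * (M - ‖f c‖) * (1 / 3)))
    convert! this using 1
    · ext n; ring
    · ring
  have hterm (n : ℕ) :
      ‖taylorCoeff f c (n + 1)‖ * r ^ (n + 1) ≤ 2 * (M - ‖f c‖) * (1 / 3) ^ (n + 1) :=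
    calc ‖taylorCoeff f c (n + 1)‖ * r ^ (n + 1)
        ≤ ‖taylorCoeff f c (n + 1)‖ * (R * (1 / 3)) ^ (n + 1) := by
          gcongr
          linarith
      _ = ‖taylorCoeff f c (n + 1)‖ * R ^ (n + 1) * (1 / 3) ^ (n + 1) := by ring
      _ ≤ 2 * (M - ‖f c‖) * (1 / 3) ^ (n + 1) := by
          gcongr ?_ * _
          exact norm_taylorCoeff_mul_pow_le_two_mul_sub_norm hR hf hM n.succ_ne_zero
  have htail := ((summable_nat_add_iff 1).mpr hs).tsum_le_tsum hterm hgeom.summable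
  rw [hgeom.tsum_eq] at htail
  rw [majorantSeries, hs.tsum_eq_zero_add, taylorCoeff_zero, pow_zero, mul_one]
  linarith

end Majorant

section SchwarzPick

variable {h : ℂ → ℂ} {c : ℂ} {r R : ℝ}

lemma norm_sub_lt_norm_one_sub_conj_mul {a w : ℂ} (ha : ‖a‖ < 1) (hw : ‖w‖ < 1) :
    ‖w - a‖ < ‖1 - conj a * w‖ := by
  have key : ‖1 - conj a * w‖ ^ 2 - ‖w - a‖ ^ 2 = (1 - ‖a‖ ^ 2) * (1 - ‖w‖ ^ 2) := by
    simp only [Complex.sq_norm, Complex.normSq_apply, Complex.sub_re, Complex.sub_im,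
      Complex.mul_re, Complex.mul_im, Complex.conj_re, Complex.conj_im, Complex.one_re,
      Complex.one_im]
    ring
  have ha' : 0 < 1 - ‖a‖ ^ 2 := sub_pos.mpr (pow_lt_one₀ (norm_nonneg a) ha two_ne_zero)
  have hw' : 0 < 1 - ‖w‖ ^ 2 := sub_pos.mpr (pow_lt_one₀ (norm_nonneg w) hw two_ne_zero)
  refine lt_of_pow_lt_pow_left₀ 2 (norm_nonneg _) ?_
  linarith [mul_pos ha' hw']

lemma exists_sub_eq_mul_one_sub_conj_mul (hR : 0 < R) (hd : DifferentiableOn ℂ h (ball c R))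
    (hb : ∀ z ∈ ball c R, ‖h z‖ < 1) :
    ∃ g : ℂ → ℂ, DifferentiableOn ℂ g (ball c R) ∧ (∀ z ∈ ball c R, ‖g z‖ ≤ 1 / R) ∧
      ∀ z ∈ ball c R, h z - h c = (z - c) * (g z * (1 - conj (h c) * h z)) := by
  have hlt : ∀ z ∈ ball c R, ‖h z - h c‖ < ‖1 - conj (h c) * h z‖ := fun z hz ↦
    norm_sub_lt_norm_one_sub_conj_mul (hb c (mem_ball_self hR)) (hb z hz)
  have hne : ∀ z ∈ ball c R, 1 - conj (h c) * h z ≠ 0 := fun z hz ↦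
    norm_pos_iff.mp ((norm_nonneg _).trans_lt (hlt z hz))
  set ω : ℂ → ℂ := fun z ↦ (h z - h c) / (1 - conj (h c) * h z) with hω
  have hωc : ω c = 0 := by simp [hω]
  have hωd : DifferentiableOn ℂ ω (ball c R) :=
    (hd.sub_const _).div ((hd.const_mul _).const_sub _) hne
  have hmaps : Set.MapsTo ω (ball c R) (closedBall (ω c) 1) := fun z hz ↦ by
    rw [hωc, mem_closedBall_zero_iff, hω, norm_div]
    exact div_le_one_of_le₀ (hlt z hz).le (norm_nonneg _)
  refine ⟨dslope ω c, (Complex.differentiableOn_dslope (ball_mem_nhds c hR)).mpr hωd,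
    fun z hz ↦ Complex.norm_dslope_le_div_of_mapsTo_ball hωd hmaps hz, fun z hz ↦ ?_⟩
  rw [← mul_assoc, ← smul_eq_mul (z - c), sub_smul_dslope_of_zero hωc]
  exact (div_mul_cancel₀ _ (hne z hz)).symm

lemma majorantSeries_one_sub_conj_mul_le (hd : DifferentiableOn ℂ h (ball c R))
    (hc : ‖h c‖ ≤ 1) (hr : 0 ≤ r) (hrR : r < R) :
    majorantSeries (fun z ↦ 1 - conj (h c) * h z) c r ≤
      (1 - ‖h c‖ ^ 2) + ‖h c‖ * majorantSeries (fun z ↦ h z - h c) c r := by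
  have hsplit : (fun z ↦ 1 - conj (h c) * h z) =
      fun z ↦ ((1 - ‖h c‖ ^ 2 : ℝ) : ℂ) - conj (h c) * (h z - h c) := by
    ext z
    push_cast
    linear_combination -Complex.conj_mul' (h c)
  rw [hsplit]
  refine (majorantSeries_sub_le (differentiableOn_const _) ((hd.sub_const _).const_mul _)
    hr hrR).trans_eq ?_
  rw [majorantSeries_const, majorantSeries_const_mul, RCLike.norm_conj, Complex.norm_real,
    norm_of_nonneg (sub_nonneg.mpr (pow_le_one₀ (norm_nonneg _) hc))]

lemma majorantSeries_sub_apply_center_le_mul (hR : 0 < R) (hd : DifferentiableOn ℂ h (ball c R))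
    (hb : ∀ z ∈ ball c R, ‖h z‖ < 1) (hr : 0 ≤ r) (hrR : 3 * r ≤ R) :
    majorantSeries (fun z ↦ h z - h c) c r ≤
      r * (1 / R * ((1 - ‖h c‖ ^ 2) + ‖h c‖ * majorantSeries (fun z ↦ h z - h c) c r)) := by
  obtain ⟨g, hgd, hgb, hfactor⟩ := exists_sub_eq_mul_one_sub_conj_mul hR hd hb
  have hKd : DifferentiableOn ℂ (fun z ↦ 1 - conj (h c) * h z) (ball c R) :=
    (hd.const_mul _).const_sub _
  have hrR' : r < R := by linarith
  calc majorantSeries (fun z ↦ h z - h c) c r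
      = majorantSeries (fun z ↦ (z - c) * (g z * (1 - conj (h c) * h z))) c r :=
        majorantSeries_congr (eventually_of_mem (ball_mem_nhds c hR) hfactor) r
    _ ≤ r * majorantSeries (fun z ↦ g z * (1 - conj (h c) * h z)) c r := by
        simpa only [majorantSeries_sub_center] using
          majorantSeries_mul_le (differentiable_fun_id.differentiableOn.sub_const c)
            (hgd.fun_mul hKd) hr hrR'
    _ ≤ r * (majorantSeries g c r * majorantSeries (fun z ↦ 1 - conj (h c) * h z) c r) := by
        gcongr
        exact majorantSeries_mul_le hgd hKd hr hrR'
    _ ≤ r * (1 / R * ((1 - ‖h c‖ ^ 2) + ‖h c‖ * majorantSeries (fun z ↦ h z - h c) c r)) := by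
        gcongr
        · exact majorantSeries_nonneg _ _ hr
        · exact bohr_majorantSeries_le hR hgd hgb hr hrR
        · exact majorantSeries_one_sub_conj_mul_le hd (hb c (mem_ball_self hR)).le hr hrR'

end SchwarzPick

theorem coeff_sum_estimate_general {h : ℂ → ℂ} {c : ℂ} {r R : ℝ} (hR : 0 < R)
    (hd : DifferentiableOn ℂ h (ball c R)) (hb : ∀ z ∈ ball c R, ‖h z‖ < 1)
    (hr : 0 ≤ r) (hrR : 3 * r ≤ R) :
    ∑' n : ℕ, ‖taylorCoeff h c (n + 1)‖ * r ^ (n + 1) ≤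
      (1 - ‖h c‖ ^ 2) * r / (R - ‖h c‖ * r) := by
  have hrR' : r < R := by linarith
  have hc : ‖h c‖ < 1 := hb c (mem_ball_self hR)
  rw [← majorantSeries_sub_apply_center hd hr hrR', le_div_iff₀ (by nlinarith [norm_nonneg (h c)])]
  have hself := majorantSeries_sub_apply_center_le_mul hR hd hb hr hrR
  rw [mul_left_comm, one_div, ← div_eq_inv_mul, le_div_iff₀ hR] at hself
  linarith

/-- Coefficient-sum estimate `∑_{n≥1} |aₙ| rⁿ ≤ (1-a²)r/(1-ar)` for `r ≤ 1/3`. -/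
theorem coeff_sum_estimate (h : ℂ → ℂ)
    (hd : DifferentiableOn ℂ h (Metric.ball (0 : ℂ) 1))
    (hb : ∀ z : ℂ, ‖z‖ < 1 → ‖h z‖ < 1)
    (r : ℝ) (hr : r ∈ Set.Icc (0 : ℝ) (1 / 3)) :
    ∑' n : ℕ, ‖iteratedDeriv (n + 1) h 0 / (Nat.factorial (n + 1) : ℂ)‖ * r ^ (n + 1) ≤
      (1 - ‖h 0‖ ^ 2) * r / (1 - ‖h 0‖ * r) :=
  coeff_sum_estimate_general one_pos hd (fun z hz ↦ hb z (mem_ball_zero_iff.mp hz)) hr.1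
    (by linarith [hr.2])
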